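/- Let G be a c-closed graph on n vertices and v a vertex of G. Then the number of maximal cliques of G is at most the number of maximal cliques of G \ {v} plus n · 3^{(c-1)/3}. -/

import Mathlib

/-!
Deleting `v` from each maximal clique is injective, because maximal cliques form an antichain. If
`K \ {v}` is not a maximal clique of `G \ v`, then some `u ≠ v` is adjacent to all of `K \ {v}`;
maximality of `K` forces `v ∈ K` and `u ≁ v`, and `K \ {v}` is a maximal clique of the common
neighborhood of `u` and `v`. As `G` is `c`-closed, this neighborhood has at most `c - 1` vertices,
hence at most `3 ^ ((c - 1) / 3)` maximal cliques by the Moon–Moser bound. Summing over `u` gives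
the error term.
-/

/-- A graph `G` is `c`-closed if whenever two distinct vertices have at least `c`
common neighbors, they are adjacent. -/
def CClosed {V : Type*} (c : ℕ) (G : SimpleGraph V) : Prop :=
  ∀ u w : V, u ≠ w → c ≤ (G.neighborSet u ∩ G.neighborSet w).ncard → G.Adj u w

/-- `K` is a maximal clique of `G`: a clique not properly contained in any other clique. -/
def IsMaxClique {V : Type*} (G : SimpleGraph V) (K : Set V) : Prop :=
  G.IsClique K ∧ ∀ K' : Set V, G.IsClique K' → K ⊆ K' → K = K'

/-- `K` is a maximal clique of the subgraph of `G` induced by `S`: a clique of `G`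
contained in `S` that is not properly contained in any other clique of `G`
contained in `S`.  (Cliques of `G[S]` are exactly cliques of `G` contained in `S`.) -/
def IsMaxCliqueIn {V : Type*} (G : SimpleGraph V) (S : Set V) (K : Set V) : Prop :=
  K ⊆ S ∧ G.IsClique K ∧ ∀ K' : Set V, K' ⊆ S → G.IsClique K' → K ⊆ K' → K = K'

theorem injOn_sdiff_singleton_of_isAntichain {α : Type*} {A : Set (Set α)}
    (hA : IsAntichain (· ⊆ ·) A) (a : α) : Set.InjOn (· \ {a}) A := by
  intro s hs t ht (hst : s \ {a} = t \ {a})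
  by_cases hat : a ∈ t
  · refine hA.eq hs ht ?_
    rw [← Set.insert_sdiff_self_of_mem hat, ← hst, Set.insert_sdiff_singleton]
    exact Set.subset_insert a s
  · refine (hA.eq ht hs ?_).symm
    rw [← Set.sdiff_singleton_eq_self hat, ← hst]
    exact Set.sdiff_subset

theorem cube_le_three_pow (d : ℕ) : d ^ 3 ≤ 3 ^ d := by
  rcases lt_or_ge d 3 with hd | hd
  · interval_cases d <;> norm_num
  · induction d, hd using Nat.le_induction with
    | base => rfl
    | succ k hk ih =>
      have hgrowth : (k + 1) ^ 3 ≤ 3 * k ^ 3 := by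
        nlinarith [Nat.pow_le_pow_left (show 3 * (k + 1) ≤ 4 * k by lia) 3]
      calc (k + 1) ^ 3 ≤ 3 * k ^ 3 := hgrowth
        _ ≤ 3 * 3 ^ k := by gcongr
        _ = 3 ^ (k + 1) := (pow_succ' 3 k).symm

theorem natCast_le_three_rpow_div_three (d : ℕ) : (d : ℝ) ≤ 3 ^ ((d : ℝ) / 3) := by
  have hcube : ((3 : ℝ) ^ ((d : ℝ) / 3)) ^ 3 = 3 ^ d := by
    rw [← Real.rpow_mul_natCast (by norm_num), Nat.cast_ofNat, div_mul_cancel₀ _ (by norm_num),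
      Real.rpow_natCast]
  refine le_of_pow_le_pow_left₀ three_ne_zero (by positivity) ?_
  rw [hcube]
  exact_mod_cast cube_le_three_pow d

section MaxCliques

variable {V : Type*} {G : SimpleGraph V} {S T K : Set V} {v : V}

theorem isMaxCliqueIn_iff_forall_exists_not_adj :
    IsMaxCliqueIn G S K ↔ K ⊆ S ∧ G.IsClique K ∧ ∀ x ∈ S, ∃ y ∈ K, ¬G.Adj x y := by
  refine and_congr_right fun hKS => and_congr_right fun hK => ⟨fun hmax x hx => ?_, ?_⟩
  · by_contra! hadj
    have hins : K = insert x K :=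
      hmax _ (Set.insert_subset hx hKS) (hK.insert fun y hy _ => hadj y hy) (Set.subset_insert x K)
    exact G.irrefl (hadj x (hins ▸ Set.mem_insert x K))
  · refine fun hext L hLS hL hKL => hKL.antisymm fun x hxL => ?_
    obtain ⟨y, hyK, hxy⟩ := hext x (hLS hxL)
    have hx_eq : x = y := by_contra fun hne => hxy (hL hxL (hKL hyK) hne)
    exact hx_eq ▸ hyK

theorem isMaxCliqueIn_univ_iff : IsMaxCliqueIn G Set.univ K ↔ IsMaxClique G K := by
  simp [IsMaxCliqueIn, IsMaxClique]

theorem IsMaxCliqueIn.of_subset (hK : IsMaxCliqueIn G T K) (hST : S ⊆ T) (hKS : K ⊆ S) :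
    IsMaxCliqueIn G S K :=
  ⟨hKS, hK.2.1, fun L hLS => hK.2.2 L (hLS.trans hST)⟩

theorem IsMaxCliqueIn.sdiff_singleton_inter_neighborSet (hK : IsMaxCliqueIn G S K) (hv : v ∈ K) :
    IsMaxCliqueIn G (S ∩ G.neighborSet v) (K \ {v}) := by
  rw [isMaxCliqueIn_iff_forall_exists_not_adj] at hK ⊢
  obtain ⟨hKS, hclique, hext⟩ := hK
  refine ⟨fun z hz => ⟨hKS hz.1, hclique hv hz.1 (Ne.symm hz.2)⟩,
    hclique.subset Set.sdiff_subset, fun x ⟨hxS, hvx⟩ => ?_⟩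
  obtain ⟨y, hyK, hxy⟩ := hext x hxS
  exact ⟨y, ⟨hyK, fun hyv => hxy (hyv ▸ hvx.symm)⟩, hxy⟩

theorem IsMaxCliqueIn.sdiff_singleton_or_exists (hK : IsMaxCliqueIn G S K) (v : V) :
    IsMaxCliqueIn G (S \ {v}) (K \ {v}) ∨
      ∃ u ∈ S, u ≠ v ∧ ¬G.Adj u v ∧
        IsMaxCliqueIn G (S ∩ (G.neighborSet u ∩ G.neighborSet v)) (K \ {v}) := by
  obtain ⟨hKS, hclique, hext⟩ := isMaxCliqueIn_iff_forall_exists_not_adj.1 hK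
  by_cases hdel : ∀ u ∈ S \ {v}, ∃ y ∈ K \ {v}, ¬G.Adj u y
  · exact .inl <| isMaxCliqueIn_iff_forall_exists_not_adj.2
      ⟨Set.sdiff_subset_sdiff_left hKS, hclique.subset Set.sdiff_subset, hdel⟩
  · push Not at hdel
    obtain ⟨u, ⟨huS, huv⟩, hadj⟩ := hdel
    obtain ⟨y, hyK, huy⟩ := hext u huS
    obtain rfl : y = v := by_contra fun hyv => huy (hadj y ⟨hyK, hyv⟩)
    have hlink := hK.sdiff_singleton_inter_neighborSet hyK
    exact .inr ⟨u, huS, huv, huy, hlink.of_subset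
      (Set.inter_subset_inter_right S Set.inter_subset_right)
      fun z hz => ⟨hKS hz.1, hadj z hz, (hlink.1 hz).2⟩⟩

/-- The family of maximal cliques of the induced subgraph `G[S]`, as sets of vertices of `G`; it is
the object being counted. -/
def maxCliquesIn (G : SimpleGraph V) (S : Set V) : Set (Set V) :=
  {K | IsMaxCliqueIn G S K}

theorem finite_maxCliquesIn (hS : S.Finite) : (maxCliquesIn G S).Finite :=
  hS.finite_subsets.subset fun _ hK => hK.1

theorem isAntichain_maxCliquesIn : IsAntichain (· ⊆ ·) (maxCliquesIn G S) :=
  fun _ hK _ hL hne hKL => hne (hK.2.2 _ hL.1 hL.2.1 hKL)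

theorem ncard_maxCliquesIn_mem_le (hS : S.Finite) (v : V) :
    {K ∈ maxCliquesIn G S | v ∈ K}.ncard ≤ (maxCliquesIn G (S ∩ G.neighborSet v)).ncard :=
  Set.ncard_le_ncard_of_injOn (· \ {v})
    (fun _ hK => hK.1.sdiff_singleton_inter_neighborSet hK.2)
    ((injOn_sdiff_singleton_of_isAntichain isAntichain_maxCliquesIn v).mono (Set.sep_subset _ _))
    (finite_maxCliquesIn (hS.inter_of_left _))

theorem ncard_maxCliquesIn_le_sum_not_adj [DecidableRel G.Adj] (hS : S.Finite) {x : V}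
    (hx : x ∈ S) :
    (maxCliquesIn G S).ncard ≤
      ∑ y ∈ hS.toFinset with ¬G.Adj x y, (maxCliquesIn G (S ∩ G.neighborSet y)).ncard := by
  set D := hS.toFinset.filter (¬G.Adj x ·) with hD
  have hcover : maxCliquesIn G S ⊆ ⋃ y ∈ D, {K ∈ maxCliquesIn G S | y ∈ K} := fun K hK => by
    obtain ⟨hKS, -, hext⟩ := isMaxCliqueIn_iff_forall_exists_not_adj.1 hK
    obtain ⟨y, hyK, hxy⟩ := hext x hx
    exact Set.mem_biUnion (by simp [hD, hKS hyK, hxy]) ⟨hK, hyK⟩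
  have hfin : (⋃ y ∈ D, {K ∈ maxCliquesIn G S | y ∈ K}).Finite :=
    D.finite_toSet.biUnion fun y _ => (finite_maxCliquesIn hS).subset (Set.sep_subset _ _)
  calc (maxCliquesIn G S).ncard
      ≤ (⋃ y ∈ D, {K ∈ maxCliquesIn G S | y ∈ K}).ncard := Set.ncard_le_ncard hcover hfin
    _ ≤ ∑ y ∈ D, {K ∈ maxCliquesIn G S | y ∈ K}.ncard := Finset.set_ncard_biUnion_le _ _
    _ ≤ _ := Finset.sum_le_sum fun y _ => ncard_maxCliquesIn_mem_le hS y

theorem ncard_maxCliquesIn_le_sdiff_singleton_add_sum [DecidableEq V] [DecidableRel G.Adj]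
    (hS : S.Finite) (v : V) :
    (maxCliquesIn G S).ncard ≤ (maxCliquesIn G (S \ {v})).ncard +
      ∑ u ∈ hS.toFinset with u ≠ v ∧ ¬G.Adj u v,
        (maxCliquesIn G (S ∩ (G.neighborSet u ∩ G.neighborSet v))).ncard := by
  set D := hS.toFinset.filter fun u => u ≠ v ∧ ¬G.Adj u v with hD
  set C := ⋃ u ∈ D, maxCliquesIn G (S ∩ (G.neighborSet u ∩ G.neighborSet v))
  have hmaps : ∀ K ∈ maxCliquesIn G S, K \ {v} ∈ maxCliquesIn G (S \ {v}) ∪ C := fun K hK => by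
    rcases IsMaxCliqueIn.sdiff_singleton_or_exists hK v with hdel | ⟨u, huS, huv, hadj, hu⟩
    · exact .inl hdel
    · exact .inr (Set.mem_biUnion (by simp [hD, huS, huv, hadj]) hu)
  have hfin : (maxCliquesIn G (S \ {v}) ∪ C).Finite :=
    (finite_maxCliquesIn hS.sdiff).union <| D.finite_toSet.biUnion
      fun u _ => finite_maxCliquesIn (hS.inter_of_left _)
  calc (maxCliquesIn G S).ncard
      ≤ (maxCliquesIn G (S \ {v}) ∪ C).ncard :=
        Set.ncard_le_ncard_of_injOn (· \ {v}) hmaps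
          (injOn_sdiff_singleton_of_isAntichain isAntichain_maxCliquesIn v) hfin
    _ ≤ (maxCliquesIn G (S \ {v})).ncard + C.ncard := Set.ncard_union_le _ _
    _ ≤ _ := Nat.add_le_add_left (Finset.set_ncard_biUnion_le _ _) _

end MaxCliques

theorem ncard_maxCliquesIn_le_three_rpow {V : Type*} (G : SimpleGraph V) {S : Set V}
    (hS : S.Finite) : ((maxCliquesIn G S).ncard : ℝ) ≤ 3 ^ ((S.ncard : ℝ) / 3) := by
  classical
  induction hm : S.ncard using Nat.strong_induction_on generalizing S with
  | _ m ih =>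
  subst hm
  rcases S.eq_empty_or_nonempty with rfl | hne
  · have hsub : maxCliquesIn G ∅ ⊆ {∅} := fun K hK => Set.subset_empty_iff.1 hK.1
    simpa using Set.ncard_le_ncard hsub
  -- Branching at a vertex of maximum degree in `G[S]` bounds the sizes of all the branches at once.
  obtain ⟨x, hxS, hdeg⟩ :=
    Set.exists_max_image S (fun y => (S ∩ G.neighborSet y).ncard) hS hne
  set k := (S ∩ G.neighborSet x).ncard with hk
  set D := hS.toFinset.filter (¬G.Adj x ·) with hD
  have hsplit : D.card + k = S.ncard := by
    have hDcoe : (D : Set V) = S \ G.neighborSet x := by ext y; simp [hD]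
    rw [← Set.ncard_coe_finset, hDcoe, add_comm, hk,
      Set.ncard_inter_add_ncard_sdiff_eq_ncard S _ hS]
  have hlt : k < S.ncard :=
    Set.ncard_lt_ncard ⟨Set.inter_subset_left, fun hsub => G.irrefl (hsub hxS).2⟩ hS
  have hbranch : ∀ y ∈ D,
      ((maxCliquesIn G (S ∩ G.neighborSet y)).ncard : ℝ) ≤ 3 ^ ((k : ℝ) / 3) := fun y hy => by
    have hyk := hdeg y (hS.mem_toFinset.1 (Finset.mem_filter.1 hy).1)
    refine (ih _ (hyk.trans_lt hlt) (hS.inter_of_left _) rfl).trans ?_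
    gcongr
    norm_num
  calc ((maxCliquesIn G S).ncard : ℝ)
      ≤ ∑ y ∈ D, ((maxCliquesIn G (S ∩ G.neighborSet y)).ncard : ℝ) :=
        mod_cast ncard_maxCliquesIn_le_sum_not_adj hS hxS
    _ ≤ D.card * 3 ^ ((k : ℝ) / 3) := by
        simpa only [nsmul_eq_mul] using Finset.sum_le_card_nsmul D _ _ hbranch
    _ ≤ 3 ^ ((D.card : ℝ) / 3) * 3 ^ ((k : ℝ) / 3) := by
        gcongr
        exact natCast_le_three_rpow_div_three _
    _ = 3 ^ ((S.ncard : ℝ) / 3) := by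
        rw [← Real.rpow_add (by norm_num), ← add_div, ← Nat.cast_add, hsplit]

theorem CClosed.ncard_maxCliquesIn_inter_neighborSet_le {V : Type*} [Finite V] {c : ℕ}
    {G : SimpleGraph V} (hG : CClosed c G) {u v : V} (huv : u ≠ v) (hadj : ¬G.Adj u v) :
    ((maxCliquesIn G (G.neighborSet u ∩ G.neighborSet v)).ncard : ℝ) ≤
      3 ^ (((c : ℝ) - 1) / 3) := by
  have hlt : (G.neighborSet u ∩ G.neighborSet v).ncard < c :=
    lt_of_not_ge fun hle => hadj (hG u v huv hle)
  have hcard : ((G.neighborSet u ∩ G.neighborSet v).ncard : ℝ) ≤ c - 1 := by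
    rw [le_sub_iff_add_le]
    exact_mod_cast hlt
  refine (ncard_maxCliquesIn_le_three_rpow G (Set.toFinite _)).trans ?_
  gcongr
  norm_num

/-- In a `c`-closed graph on `n` vertices, the number of maximal cliques of `G`
is at most the number of maximal cliques of `G \ {v}` plus `n * 3 ^ ((c - 1)/3)`. -/
theorem card_maxCliques_le_del_add {V : Type*} [Fintype V] {c n : ℕ} (hc : 0 < c)
    (G : SimpleGraph V) (hcard : Fintype.card V = n) (hG : CClosed c G) (v : V) :
    ({K : Set V | IsMaxClique G K}.ncard : ℝ) ≤
      ({K : Set V | IsMaxCliqueIn G {u : V | u ≠ v} K}.ncard : ℝ) +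
        (n : ℝ) * 3 ^ (((c : ℝ) - 1) / 3) := by
  classical
  have huniv : {K | IsMaxClique G K} = maxCliquesIn G Set.univ :=
    Set.ext fun K => isMaxCliqueIn_univ_iff.symm
  have hdel : (Set.univ : Set V) \ {v} = {u | u ≠ v} := by ext; simp
  have hcount := ncard_maxCliquesIn_le_sdiff_singleton_add_sum (G := G) Set.finite_univ v
  simp only [Set.univ_inter, Set.Finite.toFinset_univ, hdel] at hcount
  set D := Finset.univ.filter fun u => u ≠ v ∧ ¬G.Adj u v
  have hterm : ∀ u ∈ D, ((maxCliquesIn G (G.neighborSet u ∩ G.neighborSet v)).ncard : ℝ) ≤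
      3 ^ (((c : ℝ) - 1) / 3) := fun u hu =>
    have ⟨huv, hadj⟩ := (Finset.mem_filter.1 hu).2
    hG.ncard_maxCliquesIn_inter_neighborSet_le huv hadj
  rw [huniv]
  calc ((maxCliquesIn G Set.univ).ncard : ℝ)
      ≤ (maxCliquesIn G {u | u ≠ v}).ncard +
          ∑ u ∈ D, ((maxCliquesIn G (G.neighborSet u ∩ G.neighborSet v)).ncard : ℝ) :=
        mod_cast hcount
    _ ≤ (maxCliquesIn G {u | u ≠ v}).ncard + D.card * 3 ^ (((c : ℝ) - 1) / 3) := by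
        gcongr
        simpa only [nsmul_eq_mul] using Finset.sum_le_card_nsmul D _ _ hterm
    _ ≤ (maxCliquesIn G {u | u ≠ v}).ncard + n * 3 ^ (((c : ℝ) - 1) / 3) := by
        gcongr
        exact hcard ▸ D.card_le_univ
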